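/- arXiv:2401.02434 — 11 statements merged into one kernel-verified Lean document; each statement's English description precedes it below -/
import Mathlib

section
/- The map S : List Bool → ℚ encoding the S-tree is injective, and its range is exactly the set of rationals strictly between 0 and 1: for every q : ℚ, (∃ s : List Bool, S s = q) ↔ (0 < q ∧ q < 1). Hence every reduced rational number in the interval (0,1] occurs at exactly one vertex of the S-tree (the root 1/1 together with the vertices S s). -/
/-!
If `0 < x < 1`, the left child `x / (1 + x)` lies in `(0, 1/2)` and the right child
`1 / (1 + x)` lies in `(1/2, 1)`. So the position of a value relative to `1/2` determines the
last bit of its 0-1 sequence, and both child maps are injective: this gives injectivity by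
induction. Conversely, a fraction `m / n` with `0 < m < n` is `1/2`, or the left child of
`m / (n - m)`, or the right child of `(n - m) / m`; the denominator decreases, so strong
induction on it reaches every rational of `(0, 1)`.
-/

/-- Helper computing the S-tree value from the reversed 0-1 sequence. -/
def Sa : List Bool → ℚ
  | [] => 1/2
  | b :: t => if b then 1 / (1 + Sa t) else Sa t / (1 + Sa t)

/-- The S-tree map: `S [] = 1/2`, `S (s ++ [false]) = S s / (1 + S s)` and
`S (s ++ [true]) = 1 / (1 + S s)`. -/
def S (s : List Bool) : ℚ := Sa s.reverse

theorem Sa_mem (t : List Bool) : 0 < Sa t ∧ Sa t < 1 := by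
  induction t with
  | nil => norm_num [Sa]
  | cons b t ih =>
    obtain ⟨h0, h1⟩ := ih
    have hp : 0 < 1 + Sa t := by linarith
    cases b
    · simp only [Sa, Bool.false_eq_true, if_false]
      exact ⟨by positivity, by rw [div_lt_one hp]; linarith⟩
    · simp only [Sa, if_true]
      exact ⟨by positivity, by rw [div_lt_one hp]; linarith⟩

theorem Sa_false_lt (t : List Bool) : Sa (false :: t) < 1 / 2 := by
  obtain ⟨h0, h1⟩ := Sa_mem t
  simp only [Sa, Bool.false_eq_true, if_false]
  rw [div_lt_div_iff₀ (by linarith) (by norm_num)]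
  linarith

theorem lt_Sa_true (t : List Bool) : 1 / 2 < Sa (true :: t) := by
  obtain ⟨h0, h1⟩ := Sa_mem t
  simp only [Sa, if_true]
  rw [div_lt_div_iff₀ (by norm_num) (by linarith)]
  linarith

theorem Sa_cons_inj (b : Bool) (t u : List Bool) (h : Sa (b :: t) = Sa (b :: u)) :
    Sa t = Sa u := by
  have ht := (Sa_mem t).1
  have hu := (Sa_mem u).1
  have ht' : 1 + Sa t ≠ 0 := by linarith
  have hu' : 1 + Sa u ≠ 0 := by linarith
  cases b
  · simp only [Sa, Bool.false_eq_true, if_false] at h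
    rw [div_eq_div_iff ht' hu'] at h
    linarith
  · simp only [Sa, if_true] at h
    rw [div_eq_div_iff ht' hu'] at h
    linarith

theorem Sa_injective : Function.Injective Sa := by
  intro t
  induction t with
  | nil =>
    rintro (_ | ⟨_ | _, u⟩) h
    · rfl
    · exact absurd h (Sa_false_lt u).ne'
    · exact absurd h (lt_Sa_true u).ne
  | cons b t ih =>
    rintro (_ | ⟨c, u⟩) h
    · cases b
      · exact absurd h (Sa_false_lt t).ne
      · exact absurd h (lt_Sa_true t).ne'
    · have hf := Sa_false_lt
      have ht := lt_Sa_true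
      obtain rfl : b = c := by
        cases b <;> cases c
        · rfl
        · linarith [hf t, ht u]
        · linarith [ht t, hf u]
        · rfl
      rw [ih (Sa_cons_inj b t u h)]

/-- Every fraction in `(0, 1)` is attained. The fraction `m / n` need not be reduced, so no
coprimality has to be carried through the induction on the denominator. -/
theorem exists_Sa_eq (n : ℕ) : ∀ m : ℕ, 0 < m → m < n → ∃ t, Sa t = (m : ℚ) / n := by
  induction n using Nat.strong_induction_on with
  | _ n ih =>
    intro m hm hmn
    have hmQ : (0 : ℚ) < m := by exact_mod_cast hm
    have hnQ : (m : ℚ) < n := by exact_mod_cast hmn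
    have hn0 : (n : ℚ) ≠ 0 := by linarith
    have hd : (n : ℚ) - m ≠ 0 := by linarith
    rcases lt_trichotomy (2 * m) n with h | h | h
    · obtain ⟨t, ht⟩ := ih (n - m) (by omega) m hm (by omega)
      refine ⟨false :: t, ?_⟩
      rw [Nat.cast_sub hmn.le] at ht
      have hs : 1 + (m : ℚ) / (n - m) = n / (n - m) := by field_simp; ring
      simp only [Sa, Bool.false_eq_true, if_false, ht]
      rw [hs]
      field_simp
    · refine ⟨[], ?_⟩
      have hQ : (n : ℚ) = 2 * m := by exact_mod_cast h.symm
      rw [hQ, Sa]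
      field_simp
    · obtain ⟨t, ht⟩ := ih m hmn (n - m) (by omega) (by omega)
      refine ⟨true :: t, ?_⟩
      rw [Nat.cast_sub hmn.le] at ht
      have hs : 1 + ((n : ℚ) - m) / m = n / m := by field_simp; ring
      simp only [Sa, if_true, ht]
      rw [hs, one_div_div]

/-- The S-tree map is injective and its range is exactly the rationals strictly between
0 and 1; hence every reduced rational in `(0,1]` occurs at exactly one vertex of the
S-tree (the root `1/1` together with the vertices `S s`). -/
theorem stree_injective_and_range :
    Function.Injective S ∧ ∀ q : ℚ, (∃ s : List Bool, S s = q) ↔ (0 < q ∧ q < 1) := by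
  refine ⟨fun s t h => List.reverse_injective (Sa_injective h), fun q => ⟨?_, ?_⟩⟩
  · rintro ⟨s, rfl⟩
    exact Sa_mem s.reverse
  · rintro ⟨h0, h1⟩
    have hnum : 0 < q.num := Rat.num_pos.mpr h0
    have hlt : q.num < q.den := Rat.num_lt_denom_iff.mpr h1
    have hcast : ((q.num.toNat : ℕ) : ℚ) = q.num := by
      exact_mod_cast congrArg (Int.cast : ℤ → ℚ) (Int.toNat_of_nonneg hnum.le)
    obtain ⟨t, ht⟩ := exists_Sa_eq q.den q.num.toNat (by omega) (by omega)
    refine ⟨t.reverse, ?_⟩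
    rw [S, List.reverse_reverse, ht, hcast, Rat.num_div_den]
end

section
/- Let k ≥ 1 and let a_1, …, a_k be positive integers with a_k ≥ 2. Then S applied to the bit string replicate (a_k − 2) false ++ [true] ++ replicate (a_{k−1} − 1) false ++ [true] ++ replicate (a_{k−2} − 1) false ++ ⋯ ++ [true] ++ replicate (a_1 − 1) false (for k = 1 the string is just replicate (a_1 − 2) false) equals cf(a_1, …, a_k). -/
/-- Continued fraction value `cf [a₁, …, a_k] = 1/(a₁ + 1/(a₂ + ⋯ + 1/a_k))`. -/
def cf : List ℕ → ℚ
  | [] => 0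
  | a :: t => 1 / ((a : ℚ) + cf t)

/-- The 0-1 sequence of a continued fraction on the S-tree, built from the *reversed*
list `[a_k, …, a₁]`: `replicate (a_k − 2) false` followed, for `i = k−1` down to `1`,
by `true :: replicate (a_i − 1) false`. -/
def sSeq : List ℕ → List Bool
  | [] => []
  | a :: t => List.replicate (a - 2) false ++
      t.flatMap (fun b => true :: List.replicate (b - 1) false)

theorem Sa_pos (u : List Bool) : 0 < Sa u := by
  induction u with
  | nil => norm_num [Sa]
  | cons b t ih => cases b <;> simp only [Sa] <;> norm_num <;> positivity

theorem Sa_replicate_false_append (n : ℕ) (u : List Bool) :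
    Sa (List.replicate n false ++ u) = Sa u / (1 + n * Sa u) := by
  have hu := Sa_pos u
  induction n with
  | zero => simp
  | succ n ih =>
    have h1 : (0 : ℚ) < 1 + n * Sa u := by positivity
    have h2 : (0 : ℚ) < 1 + (n + 1) * Sa u := by positivity
    have h3 : (0 : ℚ) < 1 + n * Sa u + Sa u := by positivity
    rw [List.replicate_succ, List.cons_append, Sa, ih]
    push_cast
    field_simp
    ring

/-- Appending the block of the digit `a` to a vertex acts on its value by `x ↦ 1 / (a + x)`. -/
theorem S_append_block (s : List Bool) (a : ℕ) (ha : 0 < a) :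
    S (s ++ true :: List.replicate (a - 1) false) = 1 / (a + S s) := by
  obtain ⟨n, rfl⟩ : ∃ n, a = n + 1 := ⟨a - 1, by omega⟩
  have hs := Sa_pos s.reverse
  have h2 : (0 : ℚ) < 1 + Sa s.reverse + n := by positivity
  have h3 : (0 : ℚ) < n + 1 + Sa s.reverse := by positivity
  simp only [S, List.reverse_append, List.reverse_cons, List.reverse_replicate,
    List.append_assoc, List.singleton_append, Nat.add_sub_cancel, Sa_replicate_false_append, Sa,
    if_true]
  push_cast
  field_simp
  ring

theorem S_replicate_false (n : ℕ) : S (List.replicate n false) = 1 / (n + 2) := by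
  have h := Sa_replicate_false_append n []
  rw [List.append_nil] at h
  rw [S, List.reverse_replicate, h, Sa]
  have h2 : (0 : ℚ) < 2 + n := by positivity
  field_simp
  ring

theorem sSeq_append_singleton (r : List ℕ) (hr : r ≠ []) (a : ℕ) :
    sSeq (r ++ [a]) = sSeq r ++ true :: List.replicate (a - 1) false := by
  cases r with
  | nil => exact absurd rfl hr
  | cons b t => simp [sSeq]

/-- For positive integers `a₁, …, a_k` (`k ≥ 1`) with `a_k ≥ 2`, the S-tree vertex with
0-1 sequence `replicate (a_k − 2) false ++ [true] ++ replicate (a_{k−1} − 1) false ++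
⋯ ++ [true] ++ replicate (a₁ − 1) false` equals `cf (a₁, …, a_k)`. -/
theorem stree_vertex_of_cf (l : List ℕ) (hne : l ≠ []) (hpos : ∀ a ∈ l, 0 < a)
    (hlast : 2 ≤ l.getLast hne) :
    S (sSeq l.reverse) = cf l := by
  induction l with
  | nil => exact absurd rfl hne
  | cons a t ih =>
    by_cases ht : t = []
    · subst ht
      simp only [List.getLast_singleton] at hlast
      obtain ⟨n, rfl⟩ : ∃ n, a = n + 2 := ⟨a - 2, by omega⟩
      simp [sSeq, S_replicate_false, cf]
    · rw [List.getLast_cons ht] at hlast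
      rw [List.reverse_cons, sSeq_append_singleton _ (by simpa using ht),
        S_append_block _ _ (hpos a (by simp)),
        ih ht (fun b hb => hpos b (List.mem_cons_of_mem _ hb)) hlast, cf]
end

section
/- For every integer n > 1, S ([true] ++ replicate (n − 2) false ++ [true]) = (2n − 1)/(2n + 1); that is, the vertex (2n−1)/(2n+1) of the S-tree has 0-1 sequence 1 followed by n−2 zeros followed by 1. -/
/-- The map `x ↦ x / (1 + x)` adds `1` to `1 / x`, so from `2/3` (the vertex with sequence `1`)
appending `k` zeros leads to `1 / (3/2 + k)`. -/
theorem Sa_replicate_false (k : ℕ) :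
    Sa (List.replicate k false ++ [true]) = 2 / (2 * (k : ℚ) + 3) := by
  induction k with
  | zero => norm_num [Sa]
  | succ k ih =>
    rw [List.replicate_succ, List.cons_append, Sa, ih]
    have h : (0 : ℚ) ≤ k := k.cast_nonneg
    simp only [Bool.false_eq_true, if_false]
    push_cast
    field_simp
    ring

/-- For every integer `n > 1`, the vertex `(2n−1)/(2n+1)` of the S-tree has 0-1 sequence
`1`, followed by `n−2` zeros, followed by `1`. -/
theorem stree_odd_over_odd (n : ℕ) (hn : 1 < n) :
    S ([true] ++ List.replicate (n - 2) false ++ [true]) =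
      (2 * (n : ℚ) - 1) / (2 * (n : ℚ) + 1) := by
  obtain ⟨k, rfl⟩ := Nat.exists_eq_add_of_le' hn
  have h : (0 : ℚ) ≤ k := k.cast_nonneg
  have e : ([true] ++ List.replicate (k + 2 - 2) false ++ [true]).reverse =
      true :: (List.replicate k false ++ [true]) := by simp
  have h1 : (2 : ℚ) * (k + 2) + 1 ≠ 0 := by positivity
  rw [S, e, Sa, Sa_replicate_false]
  simp only [if_true]
  push_cast
  field_simp
  ring
end

section
/- For every bit string w, every bit b, and every natural number i, V (w ++ [b, true] ++ replicate i false) = V (w ++ [b, true]) + i • V w (componentwise in ℕ × ℕ). In tree language: if k is the right child of a vertex s of the SC-tree and s is a child of t, then the left branch L_k = {k₀ = k, k₁, k₂, …} of k satisfies k_i = k_{i−1} ⊕ t for all i ≥ 1, where ⊕ is the mediant operation. -/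
/-!
Write `H s = (p, d)`. Any child of `w` has state `(_, V w)`, so the right child of that child
has state `(V w, _)`. A left step keeps the first component `p` and replaces `d` by `p + d`,
so it adds `p` to the vertex `p + d`. Hence `i` left steps from `s` give `V s + i • p`
(`V_append_replicate_false`), and here `p = V w` (`H_fst_append_true`).
-/

/-- Helper computing the SC-tree state from the reversed 0-1 sequence. -/
def Ha : List Bool → (ℕ × ℕ) × (ℕ × ℕ)
  | [] => ((1, 0), (0, 1))
  | b :: t =>
      if b then ((Ha t).2, (Ha t).1 + (Ha t).2) else ((Ha t).1, (Ha t).1 + (Ha t).2)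

/-- The SC-tree state map: `H [] = ((1,0),(0,1))` and, if `H s = (p, d)`, then
`H (s ++ [false]) = (p, p + d)` and `H (s ++ [true]) = (d, p + d)`. -/
def H (s : List Bool) : (ℕ × ℕ) × (ℕ × ℕ) := Ha s.reverse

/-- The SC-tree vertex at position `s`: the pair `p + d`, regarded as a fraction. -/
def V (s : List Bool) : ℕ × ℕ := (H s).1 + (H s).2

theorem H_append_false (s : List Bool) : H (s ++ [false]) = ((H s).1, V s) := by
  simp [H, V, Ha]

/-- The first state component after a right step below a child of `w` is the vertex `V w`,
whichever child it is. -/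
theorem H_fst_append_true (w : List Bool) (b : Bool) : (H (w ++ [b, true])).1 = V w := by
  cases b <;> simp [H, V, Ha]

theorem H_fst_append_replicate_false (s : List Bool) (i : ℕ) :
    (H (s ++ List.replicate i false)).1 = (H s).1 := by
  induction i with
  | zero => simp
  | succ n ih => rw [List.replicate_succ', ← List.append_assoc, H_append_false, ih]

/-- Along a left branch the vertices form an arithmetic progression whose common difference is
the first state component of the starting position. -/
theorem V_append_replicate_false (s : List Bool) (i : ℕ) :
    V (s ++ List.replicate i false) = V s + i • (H s).1 := by
  induction i with
  | zero => simp
  | succ n ih =>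
    rw [List.replicate_succ', ← List.append_assoc, V, H_append_false, ih,
      H_fst_append_replicate_false, succ_nsmul, add_comm, add_assoc]

/-- If `k` is the right child of a vertex `s` of the SC-tree and `s` is a child of `t`,
then the left branch `L_k = {k₀ = k, k₁, k₂, …}` of `k` satisfies `kᵢ = k_{i−1} ⊕ t`
for all `i ≥ 1`; equivalently `kᵢ = k + i • t` componentwise. -/
theorem sctree_left_branch (w : List Bool) (b : Bool) (i : ℕ) :
    V ((w ++ [b, true]) ++ List.replicate i false) = V (w ++ [b, true]) + i • V w := by
  rw [V_append_replicate_false, H_fst_append_true]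
end

section
/- For every bit string s, V (false :: s) = Prod.swap (V (true :: s)): flipping the first bit of a position's 0-1 sequence replaces the SC-tree vertex by its reciprocal. Equivalently (the paper's formulation): for integers n ≥ 2 and 1 ≤ w ≤ 2^{n−2}, if k is the w-th vertex in level n of the SC-tree, then the (2^{n−2} + w)-th vertex in level n is 1/k. -/
/-- In terms of reversed sequences, the first bit is the last entry of the list: flipping it swaps
the coordinates of both components of the state. -/
lemma Ha_append_false (t : List Bool) :
    Ha (t ++ [false]) = Prod.map Prod.swap Prod.swap (Ha (t ++ [true])) := by
  induction t with
  | nil => simp [Ha]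
  | cons b t ih => cases b <;> simp [Ha, ih]

/-- Flipping the first bit of a position's 0-1 sequence replaces the SC-tree vertex by
its reciprocal: for `n ≥ 2` and `1 ≤ w ≤ 2^{n−2}`, the `(2^{n−2}+w)`-th vertex in level
`n` is the reciprocal of the `w`-th vertex in level `n`. -/
theorem sctree_reciprocal (s : List Bool) :
    V (false :: s) = Prod.swap (V (true :: s)) := by
  simp [V, H, Ha_append_false]
end

section
/- For every bit string s, the two components of V s are coprime: Nat.gcd (V s).1 (V s).2 = 1. In other words, all the vertices of the SC-tree (except the pseudo-fractions 1/0 and 0/1) are reduced rational numbers. -/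
/-- The state `(p, d)` has determinant `p.1 * d.2 - p.2 * d.1 = ±1`, stated by saying that
its square is `1`: each step of the tree preserves the determinant up to sign. -/
theorem Ha_det_sq (t : List Bool) :
    (((Ha t).1.1 : ℤ) * (Ha t).2.2 - (Ha t).1.2 * (Ha t).2.1) ^ 2 = 1 := by
  induction t with
  | nil => simp [Ha]
  | cons b t ih =>
    cases b <;> simp only [Ha, if_true, Bool.false_eq_true, if_false, Prod.fst_add, Prod.snd_add,
      Nat.cast_add] <;> linear_combination ih

/-- All vertices of the SC-tree (except the pseudo-fractions `1/0` and `0/1`) are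
reduced: the numerator and denominator of `V s` are coprime. -/
theorem sctree_vertices_reduced (s : List Bool) :
    Nat.gcd (V s).1 (V s).2 = 1 := by
  have h := Ha_det_sq s.reverse
  rw [← Nat.coprime_iff_gcd_eq_one, ← Nat.isCoprime_iff_coprime]
  simp only [V, H, Prod.fst_add, Prod.snd_add, Nat.cast_add]
  generalize (((Ha s.reverse).1.1 : ℕ) : ℤ) = a at *
  generalize (((Ha s.reverse).1.2 : ℕ) : ℤ) = b at *
  generalize (((Ha s.reverse).2.1 : ℕ) : ℤ) = c at *
  generalize (((Ha s.reverse).2.2 : ℕ) : ℤ) = d at *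
  -- With `D = a * d - b * c`, one has `D = d * (a + c) - c * (b + d)`; multiply by `D`.
  exact ⟨(a * d - b * c) * d, -((a * d - b * c) * c), by linear_combination h⟩
end

section
/- For all natural numbers a, b, c, d, the following are equivalent: (1) there exists a bit string s with H s = ((a,b),(c,d)) or H s = ((c,d),(a,b)); (2) (b·c : ℤ) − a·d = 1 or (b·c : ℤ) − a·d = −1. In the paper's language: two vertices a/b and c/d of the SC-tree are addable to each other (their mediant (a+c)/(b+d) is again produced as a vertex of the SC-tree, which happens exactly when the pair {a/b, c/d} occurs as the state at some position of the tree) if and only if bc − ad = ±1. -/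
/-- The unordered pair `{p, q}` occurs as a state of the tree, the position being read backwards
(as `Ha` does). -/
def Addable (p q : ℕ × ℕ) : Prop := ∃ t, Ha t = (p, q) ∨ Ha t = (q, p)

lemma Addable.symm {p q : ℕ × ℕ} (h : Addable p q) : Addable q p := by
  obtain ⟨t, h⟩ := h
  exact ⟨t, h.symm⟩

lemma Addable.add {p q : ℕ × ℕ} (h : Addable p q) : Addable p (p + q) := by
  obtain ⟨t, h | h⟩ := h
  · exact ⟨false :: t, by simp [Ha, h]⟩
  · exact ⟨true :: t, by simp [Ha, h, add_comm]⟩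

lemma det_Ha (t : List Bool) :
    ((Ha t).1.2 * (Ha t).2.1 : ℤ) - ((Ha t).1.1 * (Ha t).2.2 : ℤ) = 1 ∨
      ((Ha t).1.2 * (Ha t).2.1 : ℤ) - ((Ha t).1.1 * (Ha t).2.2 : ℤ) = -1 := by
  induction t with
  | nil => simp [Ha]
  | cons x t ih =>
    cases x <;> simp only [Ha, Prod.fst_add, Prod.snd_add, Nat.cast_add, if_true,
      Bool.false_eq_true, if_false] <;> grind

/-- Euclidean descent, by induction on a bound `n` for the sum of the entries. -/
lemma addable_of_det (n : ℕ) : ∀ a b c d : ℕ, a + b + c + d ≤ n →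
    (b * c = a * d + 1 ∨ a * d = b * c + 1) → Addable (a, b) (c, d) := by
  induction n with
  | zero =>
    intro a b c d hn h
    obtain ⟨rfl, rfl, rfl, rfl⟩ : a = 0 ∧ b = 0 ∧ c = 0 ∧ d = 0 := by omega
    simp at h
  | succ n ih =>
    -- The case where `(c, d)` dominates `(a, b)`; the opposite case follows by symmetry.
    have key : ∀ a b c d : ℕ, a + b + c + d ≤ n + 1 →
        (b * c = a * d + 1 ∨ a * d = b * c + 1) → a ≤ c → b ≤ d → Addable (a, b) (c, d) := by
      intro a b c d hn h hac hbd
      obtain ⟨u, rfl⟩ := Nat.exists_eq_add_of_le hac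
      obtain ⟨v, rfl⟩ := Nat.exists_eq_add_of_le hbd
      have hpos : 0 < a + b := by
        by_contra h0
        obtain ⟨rfl, rfl⟩ : a = 0 ∧ b = 0 := by omega
        simp at h
      exact (ih a b u v (by omega) (by grind)).add
    have root : Addable (1, 0) (0, 1) := ⟨[], Or.inl rfl⟩
    -- Incomparable vectors of determinant `±1` are the two unit vectors.
    have incomp : ∀ a b c d : ℕ, (b * c = a * d + 1 ∨ a * d = b * c + 1) → c < a → b < d →
        a = 1 ∧ b = 0 ∧ c = 0 ∧ d = 1 := by
      intro a b c d h hca hbd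
      have hmul : (c + 1) * (b + 1) ≤ a * d := Nat.mul_le_mul hca hbd
      have hexp : (c + 1) * (b + 1) = b * c + b + c + 1 := by ring
      obtain ⟨rfl, rfl⟩ : b = 0 ∧ c = 0 := by omega
      have had : a * d = 1 := by omega
      exact ⟨Nat.eq_one_of_mul_eq_one_right had, rfl, rfl, Nat.eq_one_of_mul_eq_one_left had⟩
    intro a b c d hn h
    have h' : d * a = c * b + 1 ∨ c * b = d * a + 1 := by grind
    rcases le_or_gt a c with hac | hac <;> rcases le_or_gt b d with hbd | hbd
    · exact key a b c d hn h hac hbd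
    · rcases hac.eq_or_lt with rfl | hac
      · exact (key a d a b (by omega) (by grind) le_rfl hbd.le).symm
      · obtain ⟨rfl, rfl, rfl, rfl⟩ := incomp c d a b h' hac hbd
        exact root.symm
    · rcases hbd.eq_or_lt with rfl | hbd
      · exact (key c b a b (by omega) (by grind) hac.le le_rfl).symm
      · obtain ⟨rfl, rfl, rfl, rfl⟩ := incomp a b c d h hac hbd
        exact root
    · exact (key c d a b (by omega) h' hac.le hbd.le).symm

/-- Two vertices `a/b` and `c/d` of the SC-tree are addable to each other (the pair
`{a/b, c/d}` occurs as the state at some position of the tree, so that their mediant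
`(a+c)/(b+d)` is produced as a vertex) if and only if `b*c − a*d = ±1`. -/
theorem sctree_addable_iff (a b c d : ℕ) :
    (∃ s : List Bool, H s = ((a, b), (c, d)) ∨ H s = ((c, d), (a, b))) ↔
      ((b * c : ℤ) - (a * d : ℤ) = 1 ∨ (b * c : ℤ) - (a * d : ℤ) = -1) := by
  constructor
  · rintro ⟨s, h | h⟩ <;> have hd := det_Ha s.reverse <;> rw [H] at h <;> rw [h] at hd <;>
      dsimp only at hd <;> grind
  · intro h
    obtain ⟨t, ht⟩ := addable_of_det _ a b c d le_rfl (by zify; omega)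
    exact ⟨t.reverse, by simpa [H] using ht⟩
end

section
/- The map s ↦ ((V s).1 : ℚ) / ((V s).2 : ℚ) from List Bool to ℚ is injective, and its range is exactly {q : ℚ | 0 < q}. Hence the SC-tree corresponds one-to-one to the set of positive rational numbers: every positive rational occurs at exactly one vertex of the SC-tree. -/
/-- Left multiplication by the matrix of the letter `b`, acting on a column vector. -/
def leftAct (b : Bool) (x : ℕ × ℕ) : ℕ × ℕ :=
  if b then (x.2, x.1 + x.2) else (x.1 + x.2, x.2)

lemma leftAct_add (b : Bool) (x y : ℕ × ℕ) :
    leftAct b (x + y) = leftAct b x + leftAct b y := by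
  cases b <;> ext <;> simp [leftAct] <;> ring

/-- The last letter of the reversed word is the first letter of the word, so it acts on the left
on both columns of the state. -/
lemma Ha_append (t : List Bool) (b : Bool) :
    Ha (t ++ [b]) = (leftAct b (Ha t).1, leftAct b (Ha t).2) := by
  induction t with
  | nil => cases b <;> simp [Ha, leftAct]
  | cons c t ih => cases c <;> simp [Ha, ih, leftAct_add]

lemma V_cons (b : Bool) (s : List Bool) : V (b :: s) = leftAct b (V s) := by
  simp [V, H, Ha_append, leftAct_add]

lemma V_cons_false (s : List Bool) : V (false :: s) = ((V s).1 + (V s).2, (V s).2) := by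
  simp [V_cons, leftAct]

lemma V_cons_true (s : List Bool) : V (true :: s) = ((V s).2, (V s).1 + (V s).2) := by
  simp [V_cons, leftAct]

lemma V_nil : V [] = (1, 1) := by simp [V, H, Ha]

lemma V_pos (s : List Bool) : 0 < (V s).1 ∧ 0 < (V s).2 := by
  induction s with
  | nil => simp [V_nil]
  | cons b s ih => cases b <;> simp only [V_cons_false, V_cons_true] <;> omega

/-- The fraction at the vertex `s`. -/
def frac (s : List Bool) : ℚ := ((V s).1 : ℚ) / ((V s).2 : ℚ)

lemma frac_pos (s : List Bool) : 0 < frac s := by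
  have h1 : (0 : ℚ) < (V s).1 := by exact_mod_cast (V_pos s).1
  have h2 : (0 : ℚ) < (V s).2 := by exact_mod_cast (V_pos s).2
  exact div_pos h1 h2

lemma frac_nil : frac [] = 1 := by simp [frac, V_nil]

lemma frac_cons_false (s : List Bool) : frac (false :: s) = frac s + 1 := by
  have h2 : (0 : ℚ) < (V s).2 := by exact_mod_cast (V_pos s).2
  simp only [frac, V_cons_false]
  push_cast
  field_simp

lemma frac_cons_true (s : List Bool) : frac (true :: s) = (frac s + 1)⁻¹ := by
  have h1 : (0 : ℚ) < (V s).1 := by exact_mod_cast (V_pos s).1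
  have h2 : (0 : ℚ) < (V s).2 := by exact_mod_cast (V_pos s).2
  simp only [frac, V_cons_true]
  push_cast
  field_simp

lemma one_lt_frac_cons_false (s : List Bool) : 1 < frac (false :: s) := by
  rw [frac_cons_false]
  linarith [frac_pos s]

lemma frac_cons_true_lt_one (s : List Bool) : frac (true :: s) < 1 := by
  rw [frac_cons_true]
  exact inv_lt_one_of_one_lt₀ (by linarith [frac_pos s])

lemma frac_injective : Function.Injective frac := by
  intro s
  induction s with
  | nil =>
    rintro (_ | ⟨_ | _, t⟩) h
    · rfl
    · linarith [frac_nil, one_lt_frac_cons_false t]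
    · linarith [frac_nil, frac_cons_true_lt_one t]
  | cons b s ih =>
    rintro (_ | ⟨_ | _, t⟩) h <;> cases b
    · linarith [frac_nil, one_lt_frac_cons_false s]
    · linarith [frac_nil, frac_cons_true_lt_one s]
    · rw [frac_cons_false, frac_cons_false] at h
      rw [ih (add_right_cancel h)]
    · linarith [one_lt_frac_cons_false t, frac_cons_true_lt_one s]
    · linarith [one_lt_frac_cons_false s, frac_cons_true_lt_one t]
    · rw [frac_cons_true, frac_cons_true] at h
      rw [ih (add_right_cancel (inv_injective h))]

/-- Subtractive Euclidean algorithm; `N` bounds `m + n`. -/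
lemma exists_frac (N m n : ℕ) (hN : m + n ≤ N) (hm : 0 < m) (hn : 0 < n) :
    ∃ s, frac s = (m : ℚ) / n := by
  induction N generalizing m n with
  | zero => omega
  | succ N ih =>
    have hmq : (0 : ℚ) < m := by exact_mod_cast hm
    have hnq : (0 : ℚ) < n := by exact_mod_cast hn
    rcases lt_trichotomy m n with h | rfl | h
    · obtain ⟨s, hs⟩ := ih (n - m) m (by omega) (by omega) hm
      refine ⟨true :: s, ?_⟩
      rw [frac_cons_true, hs, Nat.cast_sub h.le, sub_div, div_self hmq.ne', sub_add_cancel, inv_div]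
    · exact ⟨[], by rw [frac_nil, div_self hmq.ne']⟩
    · obtain ⟨s, hs⟩ := ih (m - n) n (by omega) (by omega) hn
      refine ⟨false :: s, ?_⟩
      rw [frac_cons_false, hs, Nat.cast_sub h.le]
      field_simp
      ring

/-- The SC-tree corresponds one-to-one to the set of positive rationals: the map
sending a position to the fraction of its vertex is injective with range `{q | 0 < q}`. -/
theorem sctree_bijection :
    Function.Injective (fun s : List Bool => ((V s).1 : ℚ) / ((V s).2 : ℚ)) ∧
      ∀ q : ℚ, (∃ s : List Bool, ((V s).1 : ℚ) / ((V s).2 : ℚ) = q) ↔ 0 < q := by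
  refine ⟨frac_injective, fun q => ⟨?_, fun hq => ?_⟩⟩
  · rintro ⟨s, rfl⟩
    exact frac_pos s
  · have hnum : 0 < q.num := Rat.num_pos.mpr hq
    obtain ⟨s, hs⟩ := exists_frac _ q.num.toNat q.den le_rfl (by omega) q.den_pos
    refine ⟨s, hs.trans ?_⟩
    have hcast : ((q.num.toNat : ℕ) : ℚ) = (q.num : ℚ) := by
      exact_mod_cast Int.toNat_of_nonneg hnum.le
    rw [hcast, Rat.num_div_den]
end

section
/- Let k ≥ 2 and let a_1, …, a_k be positive integers with a_k ≥ 2. Then the SC-tree vertex at position [false] ++ replicate (a_1 − 1) false ++ [true] ++ replicate (a_2 − 1) false ++ ⋯ ++ [true] ++ replicate (a_{k−1} − 1) false ++ [true] ++ replicate (a_k − 2) false, read as a fraction, equals a_1 + cf(a_2, …, a_k), i.e. the value of the continued fraction [a_1; a_2, …, a_k] > 1. -/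
/-- The tail of the SC-tree 0-1 sequence of a continued fraction `[a₁, …, a_k]`:
`true :: replicate (a₁ − 1) false ++ ⋯ ++ true :: replicate (a_{k−1} − 1) false ++
true :: replicate (a_k − 2) false`. -/
def scSeq : List ℕ → List Bool
  | [] => []
  | [a] => true :: List.replicate (a - 2) false
  | a :: t => (true :: List.replicate (a - 1) false) ++ scSeq t

/-- One step of the SC-tree state machine. -/
def scStep (S : (ℕ × ℕ) × (ℕ × ℕ)) (b : Bool) : (ℕ × ℕ) × (ℕ × ℕ) :=
  if b then (S.2, S.1 + S.2) else (S.1, S.1 + S.2)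

/-- The state reached from `S` after reading the word `s` from left to right. -/
def scRun (S : (ℕ × ℕ) × (ℕ × ℕ)) (s : List Bool) : (ℕ × ℕ) × (ℕ × ℕ) :=
  s.foldl scStep S

lemma Ha_eq_foldr (l : List Bool) :
    Ha l = l.foldr (fun b S => scStep S b) ((1, 0), (0, 1)) := by
  induction l with
  | nil => rfl
  | cons b l ih => rw [List.foldr_cons, ← ih, Ha, scStep]

lemma H_eq_scRun (s : List Bool) : H s = scRun ((1, 0), (0, 1)) s := by
  rw [H, Ha_eq_foldr, List.foldr_reverse, scRun]

lemma scRun_append (S : (ℕ × ℕ) × (ℕ × ℕ)) (s u : List Bool) :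
    scRun S (s ++ u) = scRun (scRun S s) u :=
  List.foldl_append

lemma scRun_true_cons (p d : ℕ × ℕ) (s : List Bool) :
    scRun (p, d) (true :: s) = scRun (d, p + d) s := rfl

lemma scRun_replicate_false (n : ℕ) (p d : ℕ × ℕ) :
    scRun (p, d) (List.replicate n false) = (p, d + n • p) := by
  induction n generalizing d with
  | zero => simp [scRun]
  | succ n ih =>
    have h : scRun (p, d) (List.replicate (n + 1) false) =
        scRun (p, p + d) (List.replicate n false) := rfl
    rw [h, ih, succ_nsmul]
    congr 1
    abel

lemma cf_nonneg (t : List ℕ) : 0 ≤ cf t := by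
  induction t with
  | nil => exact le_rfl
  | cons a t ih => rw [cf]; positivity

/-- Reading `scSeq t` from the state `(p, d)` produces a vertex proportional to `cf t • p + d`,
with the same positive factor `c` in both coordinates. -/
lemma vertex_run_scSeq (t : List ℕ) (hne : t ≠ []) (hpos : ∀ a ∈ t, 0 < a)
    (hlast : 2 ≤ t.getLast hne) (p d : ℕ × ℕ) :
    ∃ c : ℚ, 0 < c ∧
      (((scRun (p, d) (scSeq t)).1 + (scRun (p, d) (scSeq t)).2).1 : ℚ) =
        c * (cf t * p.1 + d.1) ∧
      (((scRun (p, d) (scSeq t)).1 + (scRun (p, d) (scSeq t)).2).2 : ℚ) =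
        c * (cf t * p.2 + d.2) := by
  induction t generalizing p d with
  | nil => exact absurd rfl hne
  | cons b t ih =>
    have hb : 0 < b := hpos b (by simp)
    have hbq : (0 : ℚ) < b := by exact_mod_cast hb
    rcases t with _ | ⟨e, t⟩
    -- The last block is one letter shorter; the sum `p + d` defining the vertex makes up for it.
    · obtain ⟨m, rfl⟩ : ∃ m, b = m + 2 := ⟨b - 2, by simp at hlast; omega⟩
      refine ⟨_, hbq, ?_, ?_⟩ <;>
      · rw [scSeq, scRun_true_cons, scRun_replicate_false]
        simp [cf]
        field_simp
        ring
    · obtain ⟨m, rfl⟩ : ∃ m, b = m + 1 := ⟨b - 1, by omega⟩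
      have hrun : scRun (p, d) (scSeq ((m + 1) :: e :: t)) =
          scRun (d, p + d + m • d) (scSeq (e :: t)) := by
        rw [scSeq, scRun_append, scRun_true_cons, scRun_replicate_false]
        · rfl
        · simp
      obtain ⟨c, hc, h1, h2⟩ := ih (by simp) (fun a ha => hpos a (List.mem_cons_of_mem _ ha))
        (by simpa using hlast) d (p + d + m • d)
      have hx := cf_nonneg (e :: t)
      have hcf : cf ((m + 1) :: e :: t) = 1 / (((m + 1 : ℕ) : ℚ) + cf (e :: t)) := rfl
      have hden : 0 < ((m + 1 : ℕ) : ℚ) + cf (e :: t) := by positivity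
      refine ⟨c * (((m + 1 : ℕ) : ℚ) + cf (e :: t)), by positivity, ?_, ?_⟩
      · rw [hrun, h1, hcf]
        field_simp
        simp
        ring
      · rw [hrun, h2, hcf]
        field_simp
        simp
        ring

/-- For positive integers `a₁, …, a_k` (`k ≥ 2`) with `a_k ≥ 2`, the SC-tree vertex at
position `[false] ++ replicate (a₁−1) false ++ [true] ++ replicate (a₂−1) false ++ ⋯ ++
[true] ++ replicate (a_k−2) false`, read as a fraction, equals
`a₁ + cf (a₂, …, a_k)`, i.e. the value of the continued fraction `[a₁; a₂, …, a_k]`. -/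
theorem sctree_cf_gt_one (a₁ : ℕ) (t : List ℕ) (hne : t ≠ []) (ha₁ : 0 < a₁)
    (hpos : ∀ a ∈ t, 0 < a) (hlast : 2 ≤ t.getLast hne) :
    ((V (false :: (List.replicate (a₁ - 1) false ++ scSeq t))).1 : ℚ) /
        ((V (false :: (List.replicate (a₁ - 1) false ++ scSeq t))).2 : ℚ) =
      (a₁ : ℚ) + cf t := by
  have hH : H (false :: (List.replicate (a₁ - 1) false ++ scSeq t)) =
      scRun ((1, 0), (a₁, 1)) (scSeq t) := by
    have hw : false :: (List.replicate (a₁ - 1) false ++ scSeq t) =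
        List.replicate a₁ false ++ scSeq t := by
      obtain ⟨m, rfl⟩ : ∃ m, a₁ = m + 1 := ⟨a₁ - 1, by omega⟩
      rfl
    rw [hw, H_eq_scRun, scRun_append, scRun_replicate_false]
    simp
  obtain ⟨c, hc, h1, h2⟩ := vertex_run_scSeq t hne hpos hlast (1, 0) (a₁, 1)
  rw [V, hH, h1, h2]
  simp
  field_simp
  ring
end

section
/- For every bit string E = [e_1, …, e_L], define the bit string F = [f_1, …, f_L] by f_1 = ¬e_1 and f_i = e_i XOR e_{i−1} for 2 ≤ i ≤ L. Then B E = V F (equality of pairs in ℕ × ℕ): the vertex of the Stern–Brocot tree with 0-1 sequence E is exactly the vertex of the SC-tree with 0-1 sequence F. (This is the digit recoding of Theorem 3.1, which the paper equivalently phrases via the binary values of the augmented sequences 1E and 1F.) -/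
/-- Helper computing the Stern–Brocot state from the reversed 0-1 sequence. -/
def SBa : List Bool → (ℕ × ℕ) × (ℕ × ℕ)
  | [] => ((0, 1), (1, 0))
  | b :: t =>
      if b then ((SBa t).1 + (SBa t).2, (SBa t).2) else ((SBa t).1, (SBa t).1 + (SBa t).2)

/-- The Stern–Brocot state map: `SB [] = ((0,1),(1,0))` and, if `SB s = (l, r)`, then
`SB (s ++ [false]) = (l, l + r)` and `SB (s ++ [true]) = (l + r, r)`. -/
def SB (s : List Bool) : (ℕ × ℕ) × (ℕ × ℕ) := SBa s.reverse

/-- The Stern–Brocot vertex at position `s`: the mediant `l + r` of the state. -/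
def B (s : List Bool) : ℕ × ℕ := (SB s).1 + (SB s).2

/-- Helper for the digit recoding: `recodeAux prev [e_i, …]` produces
`[e_i XOR prev, …]`, carrying along the previous digit. -/
def recodeAux : Bool → List Bool → List Bool
  | _, [] => []
  | prev, e :: t => (xor e prev) :: recodeAux e t

/-- The digit recoding of Theorem 3.1: `f₁ = ¬e₁` and `fᵢ = eᵢ XOR e_{i−1}`. -/
def recode : List Bool → List Bool
  | [] => []
  | e :: t => (!e) :: recodeAux e t

theorem recode_eq_recodeAux (E : List Bool) : recode E = recodeAux true E := by
  cases E <;> simp [recode, recodeAux]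

/-- The swap invariant propagates: if the states at the reversed prefixes `A` (Stern–Brocot) and
`C` (SC) agree, after a swap if `b` is `true`, then reading `E` in one tree and its
recoding with previous digit `b` in the other leads to the same vertex. In the application `b` is
the last digit read before `E`, or `true` if there is none. -/
theorem vertex_eq_of_state_eq (E : List Bool) : ∀ (b : Bool) (A C : List Bool),
    Ha C = (if b then (SBa A).swap else SBa A) →
    (SBa (E.reverse ++ A)).1 + (SBa (E.reverse ++ A)).2 =
      (Ha ((recodeAux b E).reverse ++ C)).1 + (Ha ((recodeAux b E).reverse ++ C)).2 := by
  induction E with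
  | nil =>
    intro b A C h
    cases b <;> simp [recodeAux, h, add_comm]
  | cons e t ih =>
    intro b A C h
    have hstep : Ha (xor e b :: C) = (if e then (SBa (e :: A)).swap else SBa (e :: A)) := by
      cases b <;> cases e <;> simp [Ha, SBa, h, add_comm]
    simpa [recodeAux] using ih e (e :: A) (xor e b :: C) hstep

/-- The vertex of the Stern–Brocot tree with 0-1 sequence `E` is exactly the vertex of
the SC-tree with 0-1 sequence `F`, where `f₁ = ¬e₁` and `fᵢ = eᵢ XOR e_{i−1}`. -/
theorem sternBrocot_eq_sctree_recode (E : List Bool) :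
    B E = V (recode E) := by
  rw [recode_eq_recodeAux]
  simpa [B, V, SB, H] using vertex_eq_of_state_eq E true [] [] rfl
end

section
/- Let M ≥ 1 and 1 ≤ N_s ≤ 2^{M−1}, and write the binary expansion N_s − 1 = Σ_{i=1}^{k} 2^{r_i} with r_1 > r_2 > ⋯ > r_k ≥ 0 (k = 0 when N_s = 1). Define N_c = 1 + Σ_{j=1}^{k/2} (2^{r_{2j−1}+1} − 2^{r_{2j}+1}) if k is even, and N_c = 1 + 2^M − 2^{r_1+1} + Σ_{j=1}^{(k−1)/2} (2^{r_{2j}+1} − 2^{r_{2j+1}+1}) if k is odd. Let x be the bit string of length M − 1 whose binary value is N_s − 1, and let y be the bit string of length M whose binary value is N_c − 1. Then S x = C y: the N_s-th vertex in level M of the S-tree equals the N_c-th vertex in level M of the Calkin–Wilf tree. -/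
/-- Helper computing the Calkin–Wilf value from the reversed 0-1 sequence. -/
def Ca : List Bool → ℚ
  | [] => 1
  | b :: t => if b then 1 + Ca t else Ca t / (1 + Ca t)

/-- The Calkin–Wilf tree map: `C [] = 1`, `C (s ++ [false]) = C s / (1 + C s)` and
`C (s ++ [true]) = 1 + C s`. -/
def C (s : List Bool) : ℚ := Ca s.reverse

/-- Binary value of a 0-1 sequence, most significant bit first. -/
def binVal (s : List Bool) : ℕ := s.foldl (fun v b => 2 * v + (if b then 1 else 0)) 0

/-- The word, least significant bit first, whose bit in position `p` is the parity of the bits of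
the input in positions below `p`, offset by the initial parity given as first argument. It is one
bit longer than the input. -/
def parityWord : Bool → List Bool → List Bool
  | p, [] => [p]
  | p, b :: t => p :: parityWord (xor p b) t

/-- Binary value of a 0-1 sequence, least significant bit first. -/
def leVal : List Bool → ℤ
  | [] => 0
  | b :: t => (if b then 1 else 0) + 2 * leVal t

/-- The alternating sum of `2 ^ (r i + 1)` over `i < k`, in which the term `i = k - 1` has
sign `-`. -/
def altSum (r : ℕ → ℕ) : ℕ → ℤ
  | 0 => 0
  | k + 1 => -altSum r k - 2 ^ (r k + 1)

lemma length_parityWord (p : Bool) (l : List Bool) :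
    (parityWord p l).length = l.length + 1 := by
  induction l generalizing p with
  | nil => rfl
  | cons b t ih => simp [parityWord, ih]

lemma Ca_pos (l : List Bool) : 0 < Ca l := by
  induction l with
  | nil => simp [Ca]
  | cons b t ih =>
    cases b <;> simp only [Ca, if_true, Bool.false_eq_true, if_false] <;> positivity

/-- Complementing a Calkin–Wilf word inverts the vertex. -/
lemma Ca_parityWord_not (p : Bool) (l : List Bool) :
    Ca (parityWord (!p) l) = 1 / Ca (parityWord p l) := by
  induction l generalizing p with
  | nil => cases p <;> norm_num [parityWord, Ca]
  | cons b t ih =>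
    have h := ih (xor p b)
    have hpos := Ca_pos (parityWord (xor p b) t)
    have hx : xor (!p) b = !(xor p b) := by cases p <;> cases b <;> rfl
    simp only [parityWord, Ca, hx, h]
    cases p <;> simp only [Bool.not_false, Bool.not_true, if_true, Bool.false_eq_true, if_false]
      <;> field_simp <;> ring

lemma Sa_eq_Ca_parityWord (l : List Bool) : Sa l = Ca (parityWord false l) := by
  induction l with
  | nil => norm_num [Sa, Ca, parityWord]
  | cons b t ih =>
    have hpos := Ca_pos (parityWord false t)
    have h := Ca_parityWord_not false t
    rw [Bool.not_false] at h
    cases b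
    · simp [Sa, Ca, parityWord, ih]
    · simp only [Sa, Ca, parityWord, ih, Bool.false_xor, if_true, h, Bool.false_eq_true, if_false]
      field_simp
      ring

lemma leVal_parityWord_not (p : Bool) (l : List Bool) :
    leVal (parityWord (!p) l) = 2 ^ (l.length + 1) - 1 - leVal (parityWord p l) := by
  induction l generalizing p with
  | nil => cases p <;> simp [parityWord, leVal]
  | cons b t ih =>
    have hx : xor (!p) b = !(xor p b) := by cases p <;> cases b <;> rfl
    simp only [parityWord, leVal, hx, ih, List.length_cons]
    cases p <;> simp <;> ring

lemma binVal_eq_leVal (l : List Bool) : (binVal l : ℤ) = leVal l.reverse := by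
  induction l using List.reverseRecOn with
  | nil => rfl
  | append_singleton t b ih =>
    have h : binVal (t ++ [b]) = 2 * binVal t + (if b then 1 else 0) := by simp [binVal]
    rw [h, List.reverse_append]
    push_cast
    rw [ih]
    simp [leVal]
    ring

lemma leVal_injective_of_length {l l' : List Bool} (hlen : l.length = l'.length)
    (h : leVal l = leVal l') : l = l' := by
  induction l generalizing l' with
  | nil => exact (List.length_eq_zero_iff.mp hlen.symm).symm
  | cons b t ih =>
    cases l' with
    | nil => simp at hlen
    | cons b' t' =>
      simp only [leVal] at h
      have hb : b = b' := by
        cases b <;> cases b' <;> simp at h ⊢ <;> omega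
      subst hb
      rw [ih (by simpa using hlen) (by linarith)]

lemma altSum_pred {r : ℕ → ℕ} {k : ℕ} (h : ∀ i < k, 1 ≤ r i) :
    altSum r k = 2 * altSum (fun i => r i - 1) k := by
  induction k with
  | zero => rfl
  | succ k ih =>
    obtain ⟨n, hn⟩ := Nat.exists_eq_add_of_le' (h k (by omega))
    simp only [altSum, ih fun i hi => h i (by omega), hn, Nat.add_sub_cancel]
    ring

lemma sum_two_pow_pred {r : ℕ → ℕ} {k : ℕ} (h : ∀ i < k, 1 ≤ r i) :
    ∑ i ∈ Finset.range k, (2 : ℤ) ^ r i = 2 * ∑ i ∈ Finset.range k, (2 : ℤ) ^ (r i - 1) := by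
  rw [Finset.mul_sum]
  refine Finset.sum_congr rfl fun i hi => ?_
  obtain ⟨n, hn⟩ := Nat.exists_eq_add_of_le' (h i (Finset.mem_range.mp hi))
  rw [hn, Nat.add_sub_cancel]
  ring

/-- The value of the parity word in terms of the positions `r 0 > ⋯ > r (k - 1)` of the ones of the
input. Removing the lowest bit of the input lowers all positions by one, and drops the last
position `r (k - 1) = 0` if that bit is a one. -/
lemma leVal_parityWord (l : List Bool) (k : ℕ) (r : ℕ → ℕ)
    (hanti : ∀ i j, i < j → j < k → r j < r i)
    (hsum : leVal l = ∑ i ∈ Finset.range k, (2 : ℤ) ^ r i) :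
    leVal (parityWord false l) =
      altSum r k + if k % 2 = 0 then 0 else 2 ^ (l.length + 1) := by
  induction l generalizing k r with
  | nil =>
    cases k with
    | zero => simp [parityWord, leVal, altSum]
    | succ k =>
      have : (0 : ℤ) < ∑ i ∈ Finset.range (k + 1), (2 : ℤ) ^ r i :=
        Finset.sum_pos (fun i _ => by positivity) (by simp)
      simp only [leVal] at hsum
      omega
  | cons b t ih =>
    have hb : b = true ↔ ∃ k', k = k' + 1 ∧ r k' = 0 := by
      cases k with
      | zero =>
        cases b
        · simp
        · simp [leVal] at hsum
          omega
      | succ k =>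
        rw [Finset.sum_range_succ,
          sum_two_pow_pred fun i hi => by have := hanti i k hi (by omega); omega] at hsum
        rcases Nat.eq_zero_or_pos (r k) with h0 | h0
        · cases b
          · simp [leVal, h0] at hsum
            omega
          · simpa using h0
        · obtain ⟨n, hn⟩ := Nat.exists_eq_add_of_le' h0
          cases b
          · simp [hn]
          · simp [leVal, hn, pow_succ] at hsum
            omega
    cases b
    · have h1 : ∀ i < k, 1 ≤ r i := by
        intro i hi
        by_contra h0
        refine absurd (hb.mpr ⟨i, ?_, by omega⟩) (by simp)
        by_contra hne
        have := hanti i (i + 1) (by omega) (by omega)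
        omega
      rw [sum_two_pow_pred h1] at hsum
      have := ih k (fun i => r i - 1)
        (fun i j hij hj => by have := hanti i j hij hj; have := h1 j hj; omega)
        (by simp [leVal] at hsum; exact hsum)
      simp only [parityWord, leVal, Bool.false_xor, this, altSum_pred h1, List.length_cons]
      split_ifs <;> simp_all <;> ring
    · obtain ⟨k', rfl, h0⟩ := hb.mp rfl
      have h1 : ∀ i < k', 1 ≤ r i := fun i hi => by
        have := hanti i k' hi (by omega)
        omega
      rw [Finset.sum_range_succ, sum_two_pow_pred h1, h0] at hsum
      have := ih k' (fun i => r i - 1)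
        (fun i j hij hj => by
          have := hanti i j hij (by omega)
          have := h1 j hj
          omega)
        (by simp [leVal] at hsum; linarith)
      have hc := leVal_parityWord_not false t
      rw [Bool.not_false, this] at hc
      simp only [parityWord, leVal, Bool.false_xor, hc, altSum, altSum_pred h1, h0,
        List.length_cons]
      rcases Nat.mod_two_eq_zero_or_one k' with hk | hk
      · have : (k' + 1) % 2 = 1 := by omega
        simp [hk, this]
        ring
      · have : (k' + 1) % 2 = 0 := by omega
        simp [hk, this]
        ring

lemma altSum_even (r : ℕ → ℕ) (m : ℕ) (hanti : ∀ i j, i < j → j < 2 * m → r j < r i) :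
    ((∑ j ∈ Finset.range m, (2 ^ (r (2 * j) + 1) - 2 ^ (r (2 * j + 1) + 1)) : ℕ) : ℤ) =
      altSum r (2 * m) := by
  induction m with
  | zero => rfl
  | succ m ih =>
    have h : 2 ^ (r (2 * m + 1) + 1) ≤ 2 ^ (r (2 * m) + 1) :=
      Nat.pow_le_pow_right (by norm_num)
        (by have := hanti (2 * m) (2 * m + 1) (by omega) (by omega); omega)
    rw [Finset.sum_range_succ, Nat.cast_add, Nat.cast_sub h,
      ih fun i j hij hj => hanti i j hij (by omega), show 2 * (m + 1) = 2 * m + 1 + 1 by ring]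
    simp only [altSum]
    push_cast
    ring

lemma altSum_odd (r : ℕ → ℕ) (m : ℕ) (hanti : ∀ i j, i < j → j < 2 * m + 1 → r j < r i) :
    ((∑ j ∈ Finset.range m, (2 ^ (r (2 * j + 1) + 1) - 2 ^ (r (2 * j + 2) + 1)) : ℕ) : ℤ) =
      altSum r (2 * m + 1) + 2 ^ (r 0 + 1) := by
  induction m with
  | zero => simp [altSum]
  | succ m ih =>
    have h : 2 ^ (r (2 * m + 2) + 1) ≤ 2 ^ (r (2 * m + 1) + 1) :=
      Nat.pow_le_pow_right (by norm_num)
        (by have := hanti (2 * m + 1) (2 * m + 2) (by omega) (by omega); omega)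
    rw [Finset.sum_range_succ, Nat.cast_add, Nat.cast_sub h,
      ih fun i j hij hj => hanti i j hij (by omega),
      show 2 * (m + 1) + 1 = 2 * m + 1 + 1 + 1 by ring]
    simp only [altSum]
    push_cast
    ring

/-- Theorem 3.2: let `M ≥ 1`, `1 ≤ Ns ≤ 2^{M−1}`, and write the binary expansion
`Ns − 1 = Σ_{i=1}^{k} 2^{r_i}` with `r_1 > r_2 > ⋯ > r_k ≥ 0` (here 0-indexed, so
`r 0 = r_1`). With `Nc = 1 + Σ_{j=1}^{k/2} (2^{r_{2j−1}+1} − 2^{r_{2j}+1})` for even `k`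
and `Nc = 1 + 2^M − 2^{r_1+1} + Σ_{j=1}^{(k−1)/2} (2^{r_{2j}+1} − 2^{r_{2j+1}+1})` for
odd `k`, the `Ns`-th vertex in level `M` of the S-tree (0-1 sequence `x` of length
`M − 1` with binary value `Ns − 1`) equals the `Nc`-th vertex in level `M` of the
Calkin–Wilf tree (0-1 sequence `y` of length `M` with binary value `Nc − 1`). -/
theorem stree_to_calkinWilf (M Ns k : ℕ) (r : ℕ → ℕ)
    (hM : 1 ≤ M) (hNs₁ : 1 ≤ Ns) (hNs₂ : Ns ≤ 2 ^ (M - 1))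
    (hanti : ∀ i j, i < j → j < k → r j < r i)
    (hexp : Ns - 1 = ∑ i ∈ Finset.range k, 2 ^ r i)
    (x y : List Bool)
    (hx₁ : x.length = M - 1) (hx₂ : binVal x = Ns - 1)
    (hy₁ : y.length = M)
    (hy₂ : binVal y =
      (if k % 2 = 0 then
          1 + ∑ j ∈ Finset.range (k / 2), (2 ^ (r (2 * j) + 1) - 2 ^ (r (2 * j + 1) + 1))
        else
          1 + 2 ^ M - 2 ^ (r 0 + 1) +
            ∑ j ∈ Finset.range ((k - 1) / 2),
              (2 ^ (r (2 * j + 1) + 1) - 2 ^ (r (2 * j + 2) + 1))) - 1) :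
    S x = C y := by
  have hval := leVal_parityWord x.reverse k r hanti
    (by rw [← binVal_eq_leVal, hx₂, hexp]; push_cast; rfl)
  have hlen : x.reverse.length + 1 = M := by rw [List.length_reverse, hx₁]; omega
  rw [hlen] at hval
  have hy : y.reverse = parityWord false x.reverse := by
    refine leVal_injective_of_length (by rw [length_parityWord, hlen, List.length_reverse, hy₁]) ?_
    rw [← binVal_eq_leVal, hval, hy₂]
    rcases Nat.even_or_odd' k with ⟨m, rfl | rfl⟩
    · have hdiv : 2 * m / 2 = m := by omega
      rw [if_pos (by omega), if_pos (by omega), hdiv, Nat.add_sub_cancel_left,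
        altSum_even r m hanti, add_zero]
    · have hdiv : (2 * m + 1 - 1) / 2 = m := by omega
      -- `2 ^ r 0 ≤ Ns - 1 < 2 ^ (M - 1)`, so the natural subtraction of `2 ^ (r 0 + 1)` is exact.
      have hr : 2 ^ (r 0 + 1) ≤ 2 ^ M := by
        have h1 : 2 ^ r 0 ≤ ∑ i ∈ Finset.range (2 * m + 1), 2 ^ r i :=
          Finset.single_le_sum (f := fun i => 2 ^ r i) (fun _ _ => Nat.zero_le _) (by simp)
        have h2 : 2 ^ M = 2 * 2 ^ (M - 1) := by rw [← pow_succ', Nat.sub_add_cancel hM]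
        rw [pow_succ, h2]
        omega
      have hodd := altSum_odd r m hanti
      rw [if_neg (by omega), if_neg (by omega), hdiv, Nat.add_sub_assoc hr, add_assoc,
        Nat.add_sub_cancel_left, Nat.cast_add, Nat.cast_sub hr, hodd]
      push_cast
      ring
  rw [S, C, hy, Sa_eq_Ca_parityWord]
end
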